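/- Let x_1*, …, x_n* satisfy 0 ≤ x_i* ≤ q_i for each i and x_1* ≤ x_2* ≤ … ≤ x_n*. If there exists f : ℝ → ℝ such that (f, x_1*, …, x_n*) is a feasible solution to the gross-product maximization problem, then C·(x_n*/q_n + Σ_{i=1}^{n−1} ((n−i)·(1/q_i − 1/q_{i+1}) + 1/q_i)·x_i*) ≤ B. -/

import Mathlib

/-!
Agent `1` may deviate to quality `0`, and agent `k + 1` may deviate to `x k`, which is available
because `x k ≤ x (k + 1) ≤ q (k + 1)`. Hence `f (x 1) ≥ C (x 1 / q 1)` and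
`f (x (k + 1)) ≥ f (x k) + C (x (k + 1) - x k) / q (k + 1)`. Telescoping and summing by parts gives
`f (x k) ≥ C (x k / q k + ∑_{i < k} (1 / q i - 1 / q (i + 1)) x i)` (`reward_lower_bound`).
Adding these bounds over all agents, the `i`-th increment occurs once for each of the `n - i`
agents `k > i`, so the total is the left-hand side of the claim (`sum_lower_bounds`), while the
sum of the rewards is at most `B`.
-/

open Finset in
/-- `(f, x)` is a feasible solution of the `n`-agent gross-product
maximization problem with types `q 1, …, q n`, budget `B` and cost constant
`C` (agents are indexed by `1, …, n`). -/
def FeasibleUGC (n : ℕ) (q : ℕ → ℝ) (B C : ℝ) (f : ℝ → ℝ) (x : ℕ → ℝ) : Prop :=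
  (∀ y : ℝ, 0 ≤ y → 0 ≤ f y) ∧
  (∀ i ∈ Icc 1 n, x i ∈ Set.Icc 0 (q i)) ∧
  (∀ i ∈ Icc 1 n, ∀ y ∈ Set.Icc (0 : ℝ) (q i),
    f y - y * C / q i ≤ f (x i) - x i * C / q i) ∧
  (∑ i ∈ Icc 1 n, f (x i)) ≤ B

open Finset in
/-- Telescoped incentive constraints: a lower bound for the reward paid to agent `m + 1`. -/
lemma reward_lower_bound {n : ℕ} {q : ℕ → ℝ} {B C : ℝ} {f : ℝ → ℝ} {x : ℕ → ℝ}
    (hxmono : ∀ i, 1 ≤ i → i < n → x i ≤ x (i + 1)) (h : FeasibleUGC n q B C f x) (m : ℕ)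
    (hm : m + 1 ≤ n) :
    C * (x (m + 1) / q (m + 1) + ∑ i ∈ Icc 1 m, (1 / q i - 1 / q (i + 1)) * x i)
      ≤ f (x (m + 1)) := by
  obtain ⟨h0, hx, hbr, -⟩ := h
  induction m with
  | zero =>
    have h1 : 1 ∈ Icc 1 n := mem_Icc.2 ⟨le_rfl, hm⟩
    have hdev := hbr 1 h1 0 ⟨le_rfl, (hx 1 h1).1.trans (hx 1 h1).2⟩
    have hf0 := h0 0 le_rfl
    simp only [zero_add, Icc_eq_empty_of_lt zero_lt_one, sum_empty, add_zero]
    have e : C * (x 1 / q 1) = x 1 * C / q 1 := by ring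
    have e0 : (0 : ℝ) * C / q 1 = 0 := by ring
    linarith
  | succ m ih =>
    have ih := ih (by omega)
    have hk : m + 1 ∈ Icc 1 n := mem_Icc.2 ⟨by omega, by omega⟩
    have hk' : m + 1 + 1 ∈ Icc 1 n := mem_Icc.2 ⟨by omega, hm⟩
    have hdev := hbr _ hk' (x (m + 1))
      ⟨(hx _ hk).1, (hxmono (m + 1) (by omega) (by omega)).trans (hx _ hk').2⟩
    rw [sum_Icc_succ_top (by omega)]
    have e : C * (x (m + 1 + 1) / q (m + 1 + 1)
          + (∑ i ∈ Icc 1 m, (1 / q i - 1 / q (i + 1)) * x i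
            + (1 / q (m + 1) - 1 / q (m + 1 + 1)) * x (m + 1)))
        = C * (x (m + 1) / q (m + 1) + ∑ i ∈ Icc 1 m, (1 / q i - 1 / q (i + 1)) * x i)
          + x (m + 1 + 1) * C / q (m + 1 + 1) - x (m + 1) * C / q (m + 1 + 1) := by ring
    linarith

open Finset in
/-- Exchange of summation identifying the sum of the individual lower bounds. Agents are shifted
to `k + 1` with `k < m + 1`, which avoids truncated subtraction. -/
lemma sum_lower_bounds (q x : ℕ → ℝ) (m : ℕ) :
    ∑ k ∈ range (m + 1),
        (x (k + 1) / q (k + 1) + ∑ i ∈ Icc 1 k, (1 / q i - 1 / q (i + 1)) * x i)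
      = x (m + 1) / q (m + 1) + ∑ i ∈ Icc 1 m,
          (((m + 1 : ℕ) - i : ℝ) * (1 / q i - 1 / q (i + 1)) + 1 / q i) * x i := by
  induction m with
  | zero => simp
  | succ m ih =>
    -- Raising the number of agents by one adds one copy of every increment.
    have hstep : ∑ i ∈ Icc 1 m,
          (((m + 1 + 1 : ℕ) - i : ℝ) * (1 / q i - 1 / q (i + 1)) + 1 / q i) * x i
        = ∑ i ∈ Icc 1 m,
            (((m + 1 : ℕ) - i : ℝ) * (1 / q i - 1 / q (i + 1)) + 1 / q i) * x i
          + ∑ i ∈ Icc 1 m, (1 / q i - 1 / q (i + 1)) * x i := by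
      rw [← sum_add_distrib]
      refine sum_congr rfl fun i _ => ?_
      push_cast
      ring
    rw [sum_range_succ, ih, sum_Icc_succ_top (by omega), sum_Icc_succ_top (by omega), hstep]
    push_cast
    ring

open Finset in
/-- necessity direction of Lemma 2: if `0 ≤ x i ≤ q i` for each
`i`, `x 1 ≤ ⋯ ≤ x n`, and some reward function `f` makes `(f, x)` a feasible
solution of the gross-product maximization problem, then
`C·(x n/q n + ∑_{i=1}^{n−1} ((n−i)(1/q i − 1/q (i+1)) + 1/q i)·x i) ≤ B`. -/
theorem budget_constraint_necessary (n : ℕ) (hn : 1 ≤ n) (q : ℕ → ℝ) (B C : ℝ)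
    (hq : ∀ i ∈ Icc 1 n, 0 < q i)
    (hqmono : ∀ i, 1 ≤ i → i < n → q i ≤ q (i + 1))
    (hB : 0 < B) (hC : 0 < C) (x : ℕ → ℝ)
    (hxq : ∀ i ∈ Icc 1 n, x i ∈ Set.Icc 0 (q i))
    (hxmono : ∀ i, 1 ≤ i → i < n → x i ≤ x (i + 1))
    (hfeas : ∃ f : ℝ → ℝ, FeasibleUGC n q B C f x) :
    C * (x n / q n +
        ∑ i ∈ Icc 1 (n - 1),
          (((n : ℝ) - i) * (1 / q i - 1 / q (i + 1)) + 1 / q i) * x i) ≤ B := by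
  obtain ⟨f, hf⟩ := hfeas
  obtain ⟨m, rfl⟩ : ∃ m, n = m + 1 := ⟨n - 1, by omega⟩
  rw [Nat.add_sub_cancel, ← sum_lower_bounds, mul_sum]
  have hsum : ∑ i ∈ Icc 1 (m + 1), f (x i) = ∑ k ∈ range (m + 1), f (x (k + 1)) := by
    rw [range_eq_Ico, sum_Ico_add' (fun k => f (x k))]
    rfl
  refine le_trans (sum_le_sum fun k hk => ?_) (hsum ▸ hf.2.2.2)
  exact reward_lower_bound hxmono hf k (by have := mem_range.1 hk; omega)
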